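/- arXiv:1702.03164 — 2 statements merged into one kernel-verified Lean document; each statement's English description precedes it below -/
import Mathlib

section
/- There exists a constant C > 0 such that the following holds: for every σ > 0, every probability space (Ω, 𝔽, P), every real random variable X on Ω whose law is the centered Gaussian measure N(0, σ²), and every event E ∈ 𝔽 with 0 < P(E) ≤ e^{-1}, one has E[X² 1_E] ≤ C σ² P(E) log(1/P(E)). -/
/-!
Write `p = P(E)`, `L = log (1/p) ≥ 1` and `Y = X² / (4σ²)`. Instead of rearranging onto tail sets,
the proof uses `t ≤ exp t` at `t = Y - L`, which gives the pointwise bound `Y ≤ L + p * exp Y`.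
Integrating over `E` yields `E[Y 1_E] ≤ p L + p E[exp Y]`, and `E[exp Y] = √2` by a Gaussian
integral (`integrable_exp_sq_gaussianReal`, `integral_exp_sq_gaussianReal`). As `L ≥ 1`, the right
side is at most `(1 + √2) p L`, so that `C = 4 (1 + √2)` works.
-/

open MeasureTheory ProbabilityTheory

/-- Tilting the density of `N(0, v)` by `exp (x² / (4v))` produces `√2` times the density of
`N(0, 2v)`. -/
lemma gaussianPDFReal_mul_exp_sq {v : NNReal} (hv : v ≠ 0) (x : ℝ) :
    gaussianPDFReal 0 v x * Real.exp (x ^ 2 / (4 * v)) =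
      √2 * gaussianPDFReal 0 (2 * v) x := by
  have hv' : (v : ℝ) ≠ 0 := by exact_mod_cast hv
  simp only [gaussianPDFReal, sub_zero, NNReal.coe_mul, NNReal.coe_ofNat]
  rw [mul_assoc, ← Real.exp_add, ← mul_assoc]
  have h1 : √(2 * Real.pi * (2 * v)) = √2 * √(2 * Real.pi * v) := by
    rw [← Real.sqrt_mul (by norm_num)]
    ring_nf
  rw [h1, mul_inv, ← mul_assoc, mul_inv_cancel₀ (by positivity), one_mul]
  congr 2
  field_simp
  ring

lemma integrable_exp_sq_gaussianReal {v : NNReal} (hv : v ≠ 0) :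
    Integrable (fun x : ℝ ↦ Real.exp (x ^ 2 / (4 * v))) (gaussianReal 0 v) := by
  rw [gaussianReal_of_var_ne_zero 0 hv,
    integrable_withDensity_iff_integrable_smul' (measurable_gaussianPDF 0 v)
      (ae_of_all _ fun _ ↦ gaussianPDF_lt_top)]
  simp only [toReal_gaussianPDF, smul_eq_mul, gaussianPDFReal_mul_exp_sq hv]
  exact (integrable_gaussianPDFReal 0 (2 * v)).const_mul _

lemma integral_exp_sq_gaussianReal {v : NNReal} (hv : v ≠ 0) :
    ∫ x : ℝ, Real.exp (x ^ 2 / (4 * v)) ∂(gaussianReal 0 v) = √2 := by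
  rw [integral_gaussianReal_eq_integral_smul hv]
  simp only [smul_eq_mul, gaussianPDFReal_mul_exp_sq hv]
  rw [integral_const_mul, integral_gaussianPDFReal_eq_one 0 (by positivity), mul_one]

/-- Gaussian inequality (GB), diagonal case: there is a universal constant `C > 0`
such that for every centered Gaussian random variable `X` with variance `σ²` and every
event `E` with `0 < P(E) ≤ e⁻¹`, one has `E[X² 1_E] ≤ C σ² P(E) log(1/P(E))`. -/
theorem gaussian_second_moment_on_event_bound :
    ∃ C : ℝ, 0 < C ∧
      ∀ (Ω : Type) (_ : MeasurableSpace Ω) (P : Measure Ω), IsProbabilityMeasure P →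
        ∀ (σ : ℝ), 0 < σ →
          ∀ (X : Ω → ℝ),
            P.map X = gaussianReal 0 ⟨σ ^ 2, sq_nonneg σ⟩ →
              ∀ (E : Set Ω), MeasurableSet E → P E ≠ 0 →
                (P E).toReal ≤ Real.exp (-1) →
                  ∫ ω in E, (X ω) ^ 2 ∂P ≤
                    C * σ ^ 2 * (P E).toReal * Real.log (1 / (P E).toReal) := by
  refine ⟨4 * (1 + √2), by positivity, ?_⟩
  intro Ω _ P _ σ hσ X hX E _ hE0 hE
  have hp : 0 < (P E).toReal := ENNReal.toReal_pos hE0 (measure_ne_top P E)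
  set p := (P E).toReal with hp_def
  set v : NNReal := ⟨σ ^ 2, sq_nonneg σ⟩ with hv_def
  have hvσ : (v : ℝ) = σ ^ 2 := rfl
  have hv : v ≠ 0 := by
    rw [← NNReal.coe_ne_zero, hvσ]
    positivity
  -- `Measure.map` along a function that is not a.e. measurable is zero, which is not Gaussian.
  have hXm : AEMeasurable X P := by
    apply AEMeasurable.of_map_ne_zero
    rw [hX]
    exact IsProbabilityMeasure.ne_zero _
  have hlog : Real.log (1 / p) = -Real.log p := by rw [one_div, Real.log_inv]
  have hL : 1 ≤ Real.log (1 / p) := by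
    have := Real.log_le_log hp hE
    rw [Real.log_exp] at this
    linarith
  set L := Real.log (1 / p) with hL_def
  have hgm : AEStronglyMeasurable (fun x : ℝ ↦ Real.exp (x ^ 2 / (4 * v))) (P.map X) := by
    fun_prop
  have hint : Integrable (fun ω ↦ Real.exp (X ω ^ 2 / (4 * v))) P := by
    have h := integrable_exp_sq_gaussianReal hv
    rw [← hX] at h
    exact h.comp_aemeasurable hXm
  have hval : ∫ ω, Real.exp (X ω ^ 2 / (4 * v)) ∂P = √2 := by
    have h := integral_map hXm hgm
    rw [hX, integral_exp_sq_gaussianReal hv] at h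
    exact h.symm
  have hpt : ∀ ω, X ω ^ 2 ≤ 4 * σ ^ 2 * (L + p * Real.exp (X ω ^ 2 / (4 * v))) := by
    intro ω
    have h := Real.add_one_le_exp (X ω ^ 2 / (4 * v) - L)
    have h2 : Real.exp (X ω ^ 2 / (4 * v) - L) = p * Real.exp (X ω ^ 2 / (4 * v)) := by
      rw [hlog, sub_neg_eq_add, Real.exp_add, Real.exp_log hp, mul_comm]
    rw [h2] at h
    have h3 : X ω ^ 2 = 4 * σ ^ 2 * (X ω ^ 2 / (4 * v)) := by
      rw [hvσ]
      field_simp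
    calc X ω ^ 2 = 4 * σ ^ 2 * (X ω ^ 2 / (4 * v)) := h3
      _ ≤ _ := by
        gcongr
        linarith
  have hpint : Integrable (fun ω ↦ p * Real.exp (X ω ^ 2 / (4 * v))) (P.restrict E) :=
    (hint.const_mul p).integrableOn
  calc ∫ ω in E, X ω ^ 2 ∂P
      ≤ ∫ ω in E, 4 * σ ^ 2 * (L + p * Real.exp (X ω ^ 2 / (4 * v))) ∂P := by
        apply integral_mono_of_nonneg
        · exact ae_of_all _ fun ω ↦ sq_nonneg _
        · exact ((integrable_const L).add hpint).const_mul _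
        · exact ae_of_all _ hpt
    _ = 4 * σ ^ 2 * (p * L + p * ∫ ω in E, Real.exp (X ω ^ 2 / (4 * v)) ∂P) := by
        rw [integral_const_mul, integral_add (integrable_const L) hpint, integral_const_mul]
        simp [hp_def, Measure.real]
    _ ≤ 4 * σ ^ 2 * (p * L + p * √2) := by
        gcongr
        rw [← hval]
        exact setIntegral_le_integral hint (ae_of_all _ fun ω ↦ (Real.exp_pos _).le)
    _ ≤ 4 * σ ^ 2 * (p * L + p * (√2 * L)) := by
        gcongr
        exact le_mul_of_one_le_right (Real.sqrt_nonneg 2) hL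
    _ = 4 * (1 + √2) * σ ^ 2 * p * L := by ring
end

section
/- For n ≥ 2 set m_n = 4^{-n} √( n (log n + 2 log log n) · log 2 / (2π) ). Suppose that on a probability space (Ω, 𝔽, P), for each n ≥ 2 one is given real random variables X_{n,1}, …, X_{n,4^n}, each centered Gaussian with variance at most 4^{-2n} · n · log 2 / (2π) (with no assumption on their joint law). Then Σ_{i=1}^{4^n} E[ |X_{n,i}| · 1_{|X_{n,i}| ≥ m_n} ] → 0 as n → ∞. -/
open MeasureTheory ProbabilityTheory Filter Real

/-!
For a centered Gaussian `X` of variance `v > 0` and `m > 0`, the first moment beyond the level `m`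
is explicit, because `x exp (-x² / (2v))` has the primitive `-v exp (-x² / (2v))`:
`E[|X| 1_{|X| ≥ m}] = √(2v/π) exp (-m² / (2v)) ≤ √v exp (-m² / (2v))`
(`setIntegral_abs_gaussianReal_le`). The right-hand side is increasing in `v`, so in the theorem each
variance may be replaced by the bound `s = 4^{-2n} n log 2 / (2π)`. Since `m_n² = s (log n + 2 log log n)`,
the exponential is then `1 / (√n log n)`, while `4^n √s = √(n log 2 / (2π)) ≤ √n`. Hence the sum of
the `4^n` terms is at most `1 / log n`, which tends to `0`.
-/

/-- The tail integral of `x exp (-x² / (2v))`, read off from its primitive `-v exp (-x² / (2v))`. -/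
lemma integral_Ioi_mul_exp_neg_sq {v : ℝ} (hv : 0 < v) {m : ℝ} (hm : 0 < m) :
    ∫ x in Set.Ioi m, x * exp (-x ^ 2 / (2 * v)) = v * exp (-m ^ 2 / (2 * v)) := by
  have hd : ∀ x ∈ Set.Ici m, HasDerivAt (fun x : ℝ => -v * exp (-x ^ 2 / (2 * v)))
      (x * exp (-x ^ 2 / (2 * v))) x := by
    intro x _
    have h := ((((hasDerivAt_pow 2 x).fun_neg).div_const (2 * v)).exp).const_mul (-v)
    have he : -v * (exp (-x ^ 2 / (2 * v)) * (-(((2 : ℕ) : ℝ) * x ^ (2 - 1)) / (2 * v)))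
        = x * exp (-x ^ 2 / (2 * v)) := by
      field_simp
      norm_num [mul_comm]
    exact he ▸ h
  have hlim : Tendsto (fun x : ℝ => -v * exp (-x ^ 2 / (2 * v))) atTop (nhds 0) := by
    have h1 : Tendsto (fun x : ℝ => -x ^ 2 / (2 * v)) atTop atBot := by
      have h2 : Tendsto (fun x : ℝ => x ^ 2 / (2 * v)) atTop atTop :=
        (tendsto_pow_atTop two_ne_zero).atTop_div_const (by positivity)
      simpa [neg_div, Function.comp_def] using tendsto_neg_atTop_atBot.comp h2
    simpa using (tendsto_exp_atBot.comp h1).const_mul (-v)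
  rw [integral_Ioi_of_hasDerivAt_of_nonneg' hd
    (fun x hx => mul_nonneg (hm.trans hx).le (exp_pos _).le) hlim]
  ring

/-- First moment of a centered Gaussian law beyond a level `m > 0`; the sharp constant
`√(2/π)` is replaced by `1`. -/
lemma setIntegral_abs_gaussianReal_le {v : NNReal} {s m : ℝ} (hm : 0 < m) (hs : 0 < s)
    (hvs : (v : ℝ) ≤ s) :
    ∫ x in {x : ℝ | m ≤ |x|}, |x| ∂(gaussianReal 0 v) ≤ √s * exp (-m ^ 2 / (2 * s)) := by
  have hmeas : MeasurableSet {x : ℝ | m ≤ |x|} :=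
    measurableSet_le measurable_const measurable_id.abs
  rcases eq_or_ne v 0 with rfl | hv0
  · -- The degenerate law is the Dirac mass at `0`, which lies outside `{m ≤ |x|}`.
    rw [gaussianReal_zero_var, ← integral_indicator hmeas, integral_dirac]
    simp only [Set.indicator, Set.mem_ofPred_eq, abs_zero, ite_self]
    positivity
  have hv : (0 : ℝ) < v := by positivity
  have heq : ∫ x in {x : ℝ | m ≤ |x|}, |x| ∂(gaussianReal 0 v)
      = 2 * ((√(2 * π * v))⁻¹ * (v * exp (-m ^ 2 / (2 * v)))) := by
    rw [← integral_indicator hmeas, integral_gaussianReal_eq_integral_smul hv0]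
    have h1 : ∀ x : ℝ, gaussianPDFReal 0 v x • {x : ℝ | m ≤ |x|}.indicator (fun x => |x|) x
        = (fun y : ℝ => (Set.Ici m).indicator
          (fun y => (√(2 * π * v))⁻¹ * (y * exp (-y ^ 2 / (2 * v)))) y) |x| := by
      intro x
      by_cases h : m ≤ |x|
      · simp [Set.indicator, h, gaussianPDFReal]
        ring
      · simp [Set.indicator, h]
    simp_rw [h1]
    have hsub : Set.Ici m ⊆ Set.Ioi (0 : ℝ) := fun y hy => lt_of_lt_of_le hm hy
    rw [integral_comp_abs, setIntegral_indicator measurableSet_Ici,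
      Set.inter_eq_right.mpr hsub, integral_Ici_eq_integral_Ioi,
      integral_const_mul, integral_Ioi_mul_exp_neg_sq hv hm]
  rw [heq]
  have h2 : 2 * ((√(2 * π * v))⁻¹ * v) ≤ √v := by
    have h3 : 2 * √(v : ℝ) ≤ √(2 * π * v) := by
      apply Real.le_sqrt_of_sq_le
      rw [mul_pow, Real.sq_sqrt hv.le]
      nlinarith [Real.pi_gt_three]
    have h4 : 0 < √(2 * π * v) := by positivity
    rw [inv_mul_eq_div, ← mul_div_assoc, div_le_iff₀ h4]
    nlinarith [Real.sq_sqrt hv.le, Real.sqrt_nonneg (v : ℝ)]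
  calc 2 * ((√(2 * π * v))⁻¹ * (v * exp (-m ^ 2 / (2 * v))))
      = 2 * ((√(2 * π * v))⁻¹ * v) * exp (-m ^ 2 / (2 * v)) := by ring
    _ ≤ √s * exp (-m ^ 2 / (2 * s)) := by
        refine mul_le_mul (h2.trans (Real.sqrt_le_sqrt hvs)) (exp_le_exp.mpr ?_)
          (exp_pos _).le (Real.sqrt_nonneg _)
        rw [neg_div, neg_div, neg_le_neg_iff]
        gcongr

/-- With `m² = s (log n + 2 log log n)`, where `s` is the variance bound, the `4^n` Gaussian tail
bounds add up to at most `1 / log n`. -/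
lemma four_pow_mul_tail_le {n : ℕ} (hlog : 0 < log n) {s m : ℝ} (hs : 0 < s)
    (hsn : s = (4 : ℝ) ^ (-(2 * (n : ℤ))) * n * log 2 / (2 * π))
    (hm : m ^ 2 = s * (log n + 2 * log (log n))) :
    (4 : ℝ) ^ n * (√s * exp (-m ^ 2 / (2 * s))) ≤ (log n)⁻¹ := by
  have hn : (0 : ℝ) < n := by
    rcases Nat.eq_zero_or_pos n with rfl | h
    · simp at hlog
    · exact_mod_cast h
  have h1 : exp (-m ^ 2 / (2 * s)) = (√n)⁻¹ * (log n)⁻¹ := by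
    have : -m ^ 2 / (2 * s) = -log (√n) + -log (log n) := by
      rw [hm, Real.log_sqrt hn.le]
      field_simp
      ring
    rw [this, exp_add, exp_neg, exp_neg, exp_log (by positivity), exp_log hlog]
  have h2 : (4 : ℝ) ^ n * √s ≤ √n := by
    apply Real.le_sqrt_of_sq_le
    rw [mul_pow, Real.sq_sqrt hs.le, hsn]
    have h3 : ((4 : ℝ) ^ n) ^ 2 * (4 : ℝ) ^ (-(2 * (n : ℤ))) = 1 := by
      rw [zpow_neg, ← pow_mul, mul_comm n 2]
      exact mul_inv_cancel₀ (by positivity)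
    have h4 : log 2 / (2 * π) ≤ 1 := by
      rw [div_le_one (by positivity)]
      linarith [Real.pi_gt_three, Real.log_two_lt_d9]
    calc ((4 : ℝ) ^ n) ^ 2 * ((4 : ℝ) ^ (-(2 * (n : ℤ))) * (n : ℝ) * log 2 / (2 * π))
        = (((4 : ℝ) ^ n) ^ 2 * (4 : ℝ) ^ (-(2 * (n : ℤ)))) * ((n : ℝ) * (log 2 / (2 * π))) := by ring
      _ ≤ (n : ℝ) := by rw [h3, one_mul]; exact mul_le_of_le_one_right hn.le h4
  rw [h1]
  calc (4 : ℝ) ^ n * (√s * ((√n)⁻¹ * (log n)⁻¹)) = ((4 : ℝ) ^ n * √s) * ((√n)⁻¹ * (log n)⁻¹) := by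
        ring
    _ ≤ √n * ((√n)⁻¹ * (log n)⁻¹) := by gcongr
    _ = (log n)⁻¹ := mul_inv_cancel_left₀ (by positivity) _

/-- The estimate `E[S_n] → 0` in the proof of Proposition 4.5 of the paper: with
`m_n = 4^{-n} √(n (log n + 2 log log n) log 2 / (2π))`, if for each `n ≥ 2` we have
`4^n` centered Gaussian random variables, each of variance at most
`4^{-2n} n log 2 / (2π)`, then `Σ_i E[|X_{n,i}| 1_{|X_{n,i}| ≥ m_n}] → 0`. -/
theorem sum_truncated_first_moment_tendsto_zero
    (Ω : Type) (_ : MeasurableSpace Ω) (P : Measure Ω) [IsProbabilityMeasure P]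
    (X : (n : ℕ) → Fin (4 ^ n) → Ω → ℝ)
    (v : (n : ℕ) → Fin (4 ^ n) → NNReal)
    (hlaw : ∀ n, 2 ≤ n → ∀ i, P.map (X n i) = gaussianReal 0 (v n i))
    (hv : ∀ n, 2 ≤ n → ∀ i,
      (v n i : ℝ) ≤ (4 : ℝ) ^ (-(2 * (n : ℤ))) * n * Real.log 2 / (2 * Real.pi))
    (m : ℕ → ℝ)
    (hm : ∀ n, 2 ≤ n →
      m n = (4 : ℝ) ^ (-(n : ℤ)) *
        Real.sqrt ((n : ℝ) * (Real.log n + 2 * Real.log (Real.log n)) *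
          Real.log 2 / (2 * Real.pi))) :
    Tendsto
      (fun n : ℕ => ∑ i : Fin (4 ^ n), ∫ ω in {ω | m n ≤ |X n i ω|}, |X n i ω| ∂P)
      atTop (nhds 0) := by
  have hlogn : Tendsto (fun n : ℕ => log (n : ℝ)) atTop atTop :=
    tendsto_log_atTop.comp tendsto_natCast_atTop_atTop
  refine squeeze_zero' (Eventually.of_forall fun n =>
    Finset.sum_nonneg fun i _ => integral_nonneg fun ω => abs_nonneg _) ?_ hlogn.inv_tendsto_atTop
  -- `log n > 1` makes `log log n` positive, hence `m n > 0`.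
  filter_upwards [eventually_ge_atTop 2, hlogn.eventually_gt_atTop 1] with n hn hlog
  have hn0 : (0 : ℝ) < n := by positivity
  have hlog2 : 0 < log 2 := log_pos one_lt_two
  have hL : 0 < log n + 2 * log (log n) := by
    have := log_pos hlog
    positivity
  set s : ℝ := (4 : ℝ) ^ (-(2 * (n : ℤ))) * n * log 2 / (2 * π) with hs_def
  have hs : 0 < s := by positivity
  have hmpos : 0 < m n := by rw [hm n hn]; positivity
  have hmsq : m n ^ 2 = s * (log n + 2 * log (log n)) := by
    have h4 : ((4 : ℝ) ^ (-(n : ℤ))) ^ 2 = (4 : ℝ) ^ (-(2 * (n : ℤ))) := by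
      rw [← zpow_natCast, ← zpow_mul]
      congr 1
      push_cast
      ring
    rw [hm n hn, mul_pow, Real.sq_sqrt (by positivity), h4, hs_def]
    ring
  have hterm : ∀ i : Fin (4 ^ n), ∫ ω in {ω | m n ≤ |X n i ω|}, |X n i ω| ∂P
      ≤ √s * exp (-m n ^ 2 / (2 * s)) := by
    intro i
    -- A non-measurable map would have push-forward `0`, which is not a probability measure.
    have hX : AEMeasurable (X n i) P := by
      by_contra h
      have h0 := hlaw n hn i
      rw [Measure.map_of_not_aemeasurable h] at h0
      exact (IsProbabilityMeasure.ne_zero (gaussianReal 0 (v n i))) h0.symm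
    have hmap : ∫ ω in {ω | m n ≤ |X n i ω|}, |X n i ω| ∂P
        = ∫ x in {x : ℝ | m n ≤ |x|}, |x| ∂(gaussianReal 0 (v n i)) := by
      have hmeas : MeasurableSet {x : ℝ | m n ≤ |x|} :=
        measurableSet_le measurable_const measurable_id.abs
      rw [← hlaw n hn i, setIntegral_map hmeas continuous_abs.aestronglyMeasurable hX]
      rfl
    rw [hmap]
    exact setIntegral_abs_gaussianReal_le hmpos hs (hv n hn i)
  calc ∑ i : Fin (4 ^ n), ∫ ω in {ω | m n ≤ |X n i ω|}, |X n i ω| ∂P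
      ≤ ∑ _i : Fin (4 ^ n), √s * exp (-m n ^ 2 / (2 * s)) := Finset.sum_le_sum fun i _ => hterm i
    _ = (4 : ℝ) ^ n * (√s * exp (-m n ^ 2 / (2 * s))) := by simp
    _ ≤ (log n)⁻¹ := four_pow_mul_tail_le (by linarith) hs hs_def hmsq
end
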